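/- arXiv:math/0306066 — 2 statements merged into one kernel-verified Lean document; each statement's English description precedes it below -/
import Mathlib

section
/- Let n, c, d be positive integers with d < c ≤ n. Let a_1, …, a_c be real numbers with a_1 ≥ 1 and a_i ≥ n + 1 for all i with 2 ≤ i ≤ c. Then e_d(a_1,…,a_c) > e_{d−1}(a_1,…,a_c). -/
open Finset

theorem aux_insert {ι : Type*} [DecidableEq ι] (a : ι → ℝ) (s : Finset ι) (x : ι) (hx : x ∉ s)
    (k : ℕ) : (∑ S ∈ (insert x s).powersetCard (k + 1), ∏ i ∈ S, a i)
      = (∑ S ∈ s.powersetCard (k + 1), ∏ i ∈ S, a i)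
        + a x * ∑ S ∈ s.powersetCard k, ∏ i ∈ S, a i := by
  have hn : ∀ S ∈ s.powersetCard k, x ∉ S := fun S hS h =>
    hx ((Finset.mem_powersetCard.1 hS).1 h)
  rw [Finset.powersetCard_succ_insert hx, Finset.sum_union, Finset.sum_image, Finset.mul_sum]
  · congr 1
    exact Finset.sum_congr rfl fun S hS => Finset.prod_insert (hn S hS)
  · intro S hS T hT h
    have h' : insert x S = insert x T := h
    rw [← Finset.erase_insert (hn S hS), h', Finset.erase_insert (hn T hT)]
  · rw [Finset.disjoint_left]
    intro S hS hS'
    obtain ⟨T, _, rfl⟩ := Finset.mem_image.1 hS'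
    exact hx ((Finset.mem_powersetCard.1 hS).1 (Finset.mem_insert_self x T))

theorem aux_pos {ι : Type*} (a : ι → ℝ) (s : Finset ι) (ha : ∀ i ∈ s, 0 < a i)
    (k : ℕ) : 0 ≤ (∑ S ∈ s.powersetCard k, ∏ i ∈ S, a i) :=
  Finset.sum_nonneg fun S hS => Finset.prod_nonneg fun i hi =>
    (ha i ((Finset.mem_powersetCard.1 hS).1 hi)).le

theorem aux_pos' {ι : Type*} (a : ι → ℝ) (s : Finset ι) (ha : ∀ i ∈ s, 0 < a i)
    (k : ℕ) (hk : k ≤ s.card) : 0 < (∑ S ∈ s.powersetCard k, ∏ i ∈ S, a i) :=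
  Finset.sum_pos (fun S hS => Finset.prod_pos fun i hi =>
    (ha i ((Finset.mem_powersetCard.1 hS).1 hi))) (Finset.powersetCard_nonempty.2 hk)

theorem aux_main {ι : Type*} [DecidableEq ι] (a : ι → ℝ) (B : ℝ) (hB : 0 < B) (s : Finset ι) :
    (∀ i ∈ s, B ≤ a i) → ∀ k < s.card,
    B * (∑ S ∈ s.powersetCard k, ∏ i ∈ S, a i)
      ≤ ((k : ℝ) + 1) * ∑ S ∈ s.powersetCard (k + 1), ∏ i ∈ S, a i := by
  induction s using Finset.induction_on with
  | empty => intro _ k hk; simp at hk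
  | insert x s hx ih =>
    intro ha k hk
    rw [Finset.card_insert_of_notMem hx] at hk
    have hs : ∀ i ∈ s, B ≤ a i := fun i hi => ha i (Finset.mem_insert_of_mem hi)
    have hxB : B ≤ a x := ha x (Finset.mem_insert_self x s)
    have p := aux_pos a s (fun i hi => hB.trans_le (hs i hi))
    rw [aux_insert a s x hx]
    have p1 := p (k + 1)
    have p0 := p k
    have hk0 : (0 : ℝ) ≤ k := k.cast_nonneg
    have h1 := mul_le_mul_of_nonneg_right hxB p0
    cases k with
    | zero =>
      simp only [Finset.powersetCard_zero, Finset.sum_singleton, Finset.prod_empty] at *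
      push_cast
      linarith
    | succ j =>
      rw [aux_insert a s x hx]
      have h2 := mul_le_mul_of_nonneg_left (ih hs j (by omega)) (hB.le.trans hxB)
      have h3 := mul_nonneg (add_nonneg hk0 zero_le_one) p1
      push_cast at *
      linarith

theorem aux_lt {ι : Type*} [DecidableEq ι] (a : ι → ℝ) (B : ℝ) (s : Finset ι)
    (hB : (s.card : ℝ) < B) (ha : ∀ i ∈ s, B ≤ a i) (k : ℕ) (hk : k < s.card) :
    (∑ S ∈ s.powersetCard k, ∏ i ∈ S, a i) < ∑ S ∈ s.powersetCard (k + 1), ∏ i ∈ S, a i := by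
  have hB0 : 0 < B := lt_of_le_of_lt (Nat.cast_nonneg _) hB
  have h := aux_main a B hB0 s ha k hk
  have h1 := aux_pos' a s (fun i hi => hB0.trans_le (ha i hi)) k hk.le
  have hk' : (k : ℝ) + 1 ≤ s.card := by exact_mod_cast hk
  have hk0 : (0 : ℝ) < (k : ℝ) + 1 := by positivity
  have h2 := mul_lt_mul_of_pos_right (lt_of_le_of_lt hk' hB) h1
  exact lt_of_mul_lt_mul_left (h2.trans_le h) hk0.le

/-- Let `n, c, d` be positive integers with `d < c ≤ n`, and let
`a_1, …, a_c` be real numbers with `a_1 ≥ 1` and `a_i ≥ n + 1` for `2 ≤ i ≤ c`.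
Then `e_d(a_1,…,a_c) > e_{d-1}(a_1,…,a_c)`, where `e_k` is the `k`-th
elementary symmetric polynomial. -/
theorem stmt2 (n c d : ℕ) (hn : 0 < n) (hc : 0 < c) (hd : 0 < d)
    (hdc : d < c) (hcn : c ≤ n) (a : Fin c → ℝ)
    (ha1 : 1 ≤ a ⟨0, hc⟩)
    (ha : ∀ i : Fin c, 1 ≤ (i : ℕ) → (n : ℝ) + 1 ≤ a i) :
    (∑ S ∈ Finset.univ.powersetCard (d - 1), ∏ i ∈ S, a i)
      < (∑ S ∈ Finset.univ.powersetCard d, ∏ i ∈ S, a i) := by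
  classical
  set s : Finset (Fin c) := Finset.univ.erase ⟨0, hc⟩ with hsdef
  have hx : (⟨0, hc⟩ : Fin c) ∉ s := Finset.notMem_erase _ _
  have hu : (Finset.univ : Finset (Fin c)) = insert ⟨0, hc⟩ s :=
    (Finset.insert_erase (Finset.mem_univ _)).symm
  have hcard : s.card = c - 1 := by
    rw [hsdef, Finset.card_erase_of_mem (Finset.mem_univ _), Finset.card_univ, Fintype.card_fin]
  have hB : (s.card : ℝ) < (n : ℝ) + 1 := by
    have : s.card < n + 1 := by omega
    exact_mod_cast this
  have hs : ∀ i ∈ s, (n : ℝ) + 1 ≤ a i := by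
    intro i hi
    apply ha
    have : i ≠ ⟨0, hc⟩ := Finset.ne_of_mem_erase hi
    rw [Ne, Fin.ext_iff] at this
    exact Nat.one_le_iff_ne_zero.2 this
  have key := aux_lt a _ s hB hs
  rw [hu]
  obtain ⟨k, rfl⟩ : ∃ k, d = k + 1 := ⟨d - 1, by omega⟩
  rw [Nat.add_sub_cancel, aux_insert a s _ hx]
  have h1 := key k (by omega)
  cases k with
  | zero =>
    simp only [Finset.powersetCard_zero, Finset.sum_singleton, Finset.prod_empty] at *
    linarith
  | succ j =>
    rw [aux_insert a s _ hx]
    have h2 := key j (by omega)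
    have h3 := mul_le_mul_of_nonneg_left h2.le (zero_le_one.trans ha1)
    linarith
end

section
/- Let n and c be integers with n/2 < c < n, and set d = n − c (so 1 ≤ d < c). Let e_1, …, e_c be integers with e_1 ≥ 2 and e_i ≥ n + 2 for 2 ≤ i ≤ c. Then the coefficient of X^d in the polynomial (1 − X) · ∏_{i=1}^{c} (1 + (e_i − 1) X) ∈ ℤ[X] is strictly positive. -/
open Polynomial

lemma aux_coeff (p : ℤ[X]) (a : ℤ) (k : ℕ) :
    ((1 + Polynomial.C a * Polynomial.X) * p).coeff (k+1) = p.coeff (k+1) + a * p.coeff k := by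
  rw [add_mul, one_mul, mul_assoc, coeff_add, coeff_C_mul, coeff_X_mul]

lemma aux_coeff0 (p : ℤ[X]) (a : ℤ) :
    ((1 + Polynomial.C a * Polynomial.X) * p).coeff 0 = p.coeff 0 := by
  simp [mul_coeff_zero]

lemma aux_main_s3 (M : ℤ) (hM : 0 ≤ M) (m : ℕ) (f : Fin m → ℤ) (hf : ∀ i, M ≤ f i) :
    (∏ i, (1 + Polynomial.C (f i) * Polynomial.X)).coeff 0 = 1 ∧
    (∀ k, 0 ≤ (∏ i, (1 + Polynomial.C (f i) * Polynomial.X)).coeff k) ∧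
    ∀ k : ℕ, ((m : ℤ) - k) * M * (∏ i, (1 + Polynomial.C (f i) * Polynomial.X)).coeff k ≤
      ((k : ℤ) + 1) * (∏ i, (1 + Polynomial.C (f i) * Polynomial.X)).coeff (k+1) := by
  induction m with
  | zero =>
    refine ⟨by simp, fun k => ?_, fun k => ?_⟩
    · simp only [Finset.univ_eq_empty, Finset.prod_empty, coeff_one]
      split_ifs <;> simp
    · rcases k with _ | k <;> simp [coeff_one]
  | succ m ih =>
    obtain ⟨h0, hn, hr⟩ := ih (fun i => f i.succ) (fun i => hf _)
    rw [Fin.prod_univ_succ]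
    generalize (∏ i : Fin m, (1 + Polynomial.C (f i.succ) * Polynomial.X)) = q at *
    have ha := hf 0
    generalize f 0 = a at *
    refine ⟨by rw [aux_coeff0, h0], fun k => ?_, fun k => ?_⟩
    · rcases k with _ | k
      · rw [aux_coeff0]; exact hn 0
      · rw [aux_coeff]
        have := mul_nonneg (hM.trans ha) (hn k)
        linarith [hn (k+1)]
    · rcases k with _ | k
      · rw [aux_coeff, aux_coeff0]
        have := hr 0
        rw [h0] at *
        push_cast at *
        linarith
      · rw [aux_coeff, aux_coeff]
        have e1 := hr (k+1)
        have e2 := mul_le_mul_of_nonneg_left (hr k) (hM.trans ha)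
        have e3 := mul_le_mul_of_nonneg_right ha (hn (k+1))
        push_cast at *
        linarith

lemma aux_lt_s3 (M : ℤ) (m : ℕ) (hM : (m : ℤ) < M) (f : Fin m → ℤ) (hf : ∀ i, M ≤ f i)
    (k : ℕ) (hk : k < m) : 
    (∏ i, (1 + Polynomial.C (f i) * Polynomial.X)).coeff k < 
     (∏ i, (1 + Polynomial.C (f i) * Polynomial.X)).coeff (k+1) := by
  obtain ⟨h0, hn, hr⟩ := aux_main_s3 M (by omega) m f hf
  generalize (∏ i, (1 + Polynomial.C (f i) * Polynomial.X)) = q at *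
  have key : ∀ k, k < m → 0 < q.coeff k → q.coeff k < q.coeff (k+1) := by
    intro k hk hp
    have h := hr k
    have h1 : ((k:ℤ)+1) < ((m : ℤ) - k) * M := by
      have : (1:ℤ) ≤ (m:ℤ) - k := by omega
      have : M ≤ ((m : ℤ) - k) * M := le_mul_of_one_le_left (by omega) this
      omega
    have h2 := mul_lt_mul_of_pos_right h1 hp
    exact lt_of_mul_lt_mul_left (h2.trans_le h) (by omega)
  have pos : ∀ k, k ≤ m → 0 < q.coeff k := by
    intro k
    induction k with
    | zero => intro _; rw [h0]; norm_num
    | succ k ih => intro h; exact (ih (by omega)).trans (key k (by omega) (ih (by omega)))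
  exact key k hk (pos k hk.le)

/-- Let `n, c` be integers with `n/2 < c < n`, and `d = n - c`. Let
`e_1, …, e_c` be integers with `e_1 ≥ 2` and `e_i ≥ n + 2` for `2 ≤ i ≤ c`.
Then the coefficient of `X^d` in `(1 - X) * ∏ (1 + (e_i - 1) X) ∈ ℤ[X]`
is strictly positive. -/
theorem stmt3 (n c : ℕ) (h1 : n < 2 * c) (h2 : c < n) (e : Fin c → ℤ)
    (he1 : 2 ≤ e ⟨0, by omega⟩)
    (he : ∀ i : Fin c, 1 ≤ (i : ℕ) → (n : ℤ) + 2 ≤ e i) :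
    0 < ((1 - Polynomial.X) *
        ∏ i : Fin c, (1 + Polynomial.C (e i - 1) * Polynomial.X)).coeff (n - c) := by
  obtain ⟨m, rfl⟩ : ∃ m, c = m + 1 := ⟨c - 1, by omega⟩
  obtain ⟨j, hj⟩ : ∃ j, n - (m+1) = j + 1 := ⟨n - (m+1) - 1, by omega⟩
  have hf : ∀ i : Fin m, (n:ℤ) + 1 ≤ e i.succ - 1 := fun i => by
    have := he i.succ (by simp)
    omega
  have hlt := aux_lt_s3 ((n:ℤ)+1) m (by omega) (fun i => e i.succ - 1) hf
  have h0 := (aux_main_s3 ((n:ℤ)+1) (by omega) m (fun i => e i.succ - 1) hf).1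
  rw [hj, Fin.prod_univ_succ, sub_mul, one_mul, coeff_sub, coeff_X_mul, aux_coeff]
  change 2 ≤ e 0 at he1
  generalize (∏ i : Fin m, (1 + Polynomial.C (e i.succ - 1) * Polynomial.X)) = q at *
  have l1 := hlt j (by omega)
  rcases j with _ | j
  · rw [aux_coeff0]
    rw [h0] at *
    linarith
  · rw [aux_coeff]
    have l2 := hlt j (by omega)
    have := mul_pos (show 0 < e 0 - 1 by omega) (sub_pos.2 l2)
    linarith
end
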